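/- arXiv:1411.7763 — 2 statements merged into one kernel-verified Lean document; each statement's English description precedes it below -/
import Mathlib

section
/- For all integers b, c ≥ 0, the polynomial Q_{b,c} satisfies the q-difference equation E24: (w·y·z·q^{−2(b+2c)} − 1)·Q_{b,c}(x,y,z,w) + (1−w)·Q_{b,c}(x,y,z,q^{−2}w) − w·(z−1)·q^{−2b}·Q_{b,c}(x,q²y,q^{−4}z,w) − w·(y−1)·z·q^{−2(b+2c)}·Q_{b,c}(q⁴x,q^{−2}y,z,w) = 0. -/
noncomputable section

open MvPolynomial

/-- The field `K = ℚ(q)` of rational functions in `q` over `ℚ`. -/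
abbrev K : Type := RatFunc ℚ

/-- The variable `q ∈ K = ℚ(q)`. -/
def q : K := RatFunc.X

/-- The polynomial ring `K[x,y,z,w]`. -/
abbrev P4 : Type := MvPolynomial (Fin 4) K

def xP : P4 := X 0
def yP : P4 := X 1
def zP : P4 := X 2
def wP : P4 := X 3

/-- The `K`-algebra map `K[x,y,z,w] → K[x,y,z,w]` rescaling the variables:
`x ↦ q^a·x`, `y ↦ q^b·y`, `z ↦ q^c·z`, `w ↦ q^d·w`. -/
def scl (a b c d : ℤ) : P4 →ₐ[K] P4 :=
  aeval ![C (q ^ a) * X 0, C (q ^ b) * X 1, C (q ^ c) * X 2, C (q ^ d) * X 3]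

/-- The polynomials `Q_{b,0}(x,y,z,w)`, defined by the recursion (rec1) of the paper. -/
def Qb0 : ℕ → P4
  | 0 => 1
  | b + 1 =>
      C (q ^ (4 * (b : ℤ))) * wP * yP * (zP - 1) * scl 0 0 (-4) 0 (Qb0 b)
    + C (q ^ (4 * (b : ℤ))) * wP * xP * (yP - 1) * yP * zP * scl 0 (-2) 0 0 (Qb0 b)
    + C (q ^ (6 * (b : ℤ))) * (wP - 1) * (yP - 1) * scl 0 (-2) 0 (-2) (Qb0 b)
    + C (q ^ (4 * (b : ℤ))) * wP * (xP - 1) * yP * (zP - 1) * scl (-4) 2 (-4) 0 (Qb0 b)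
    + C (q ^ (6 * (b : ℤ))) * (wP - 1) * (xP - 1) * yP * scl (-4) 0 0 (-2) (Qb0 b)

/-- The polynomials `Q_{b,c}(x,y,z,w)`: for `c ≥ 1` they are defined by the
recursion (rec2) of the paper, lowering `c`; for `c = 0` by `Qb0`. -/
def Q : ℕ → ℕ → P4
  | b, 0 => Qb0 b
  | b, c + 1 =>
      - (C (q ^ (4 * (b : ℤ) + 8 * (c : ℤ))) * wP ^ 2 * yP * (zP - 1) * zP)
          * scl 0 0 (-4) 0 (Q b c)
    + (C (q ^ (4 * (b : ℤ) + 4 * (c : ℤ) - 2)) * wP * xP * (yP - 1) * zP)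
          * (C (q ^ (2 * (b : ℤ) + 4 * (c : ℤ) + 4)) - C (q ^ (2 : ℤ)) * wP * yP * zP)
          * scl 0 (-2) 0 0 (Q b c)
    - (C (q ^ (6 * (b : ℤ) + 8 * (c : ℤ))) * (wP - 1) * wP * (yP - 1) * zP)
          * scl 0 (-2) 0 (-2) (Q b c)
    + (C (q ^ (4 * (b : ℤ) + 8 * (c : ℤ) - 2)) * wP * (xP - 1) * (zP - 1))
          * (C (q ^ (2 * (b : ℤ) + 4 * (c : ℤ) + 4)) - C (q ^ (2 : ℤ)) * wP * yP * zP)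
          * scl (-4) 2 (-4) 0 (Q b c)
    + (C (q ^ (6 * (b : ℤ) + 8 * (c : ℤ) - 2)) * (wP - 1) * (xP - 1))
          * (C (q ^ (2 * (b : ℤ) + 4 * (c : ℤ) + 4)) - C (q ^ (2 : ℤ)) * wP * yP * zP)
          * scl (-4) 0 0 (-2) (Q b c)

lemma q_ne : q ≠ 0 := RatFunc.X_ne_zero

lemma scl_x (a b c d : ℤ) : scl a b c d xP = C (q ^ a) * xP := by simp [scl, xP]
lemma scl_y (a b c d : ℤ) : scl a b c d yP = C (q ^ b) * yP := by simp [scl, yP]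
lemma scl_z (a b c d : ℤ) : scl a b c d zP = C (q ^ c) * zP := by simp [scl, zP]
lemma scl_w (a b c d : ℤ) : scl a b c d wP = C (q ^ d) * wP := by simp [scl, wP]
lemma scl_C (a b c d : ℤ) (k : K) : scl a b c d (C k) = C k := by simp [scl]

lemma scl_scl (a b c d a' b' c' d' : ℤ) (F : P4) :
    scl a b c d (scl a' b' c' d' F) = scl (a + a') (b + b') (c + c') (d + d') F := by
  have : (scl a b c d).comp (scl a' b' c' d') = scl (a + a') (b + b') (c + c') (d + d') := by
    apply MvPolynomial.algHom_ext
    intro i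
    fin_cases i <;> simp [scl, zpow_add₀ q_ne] <;> ring
  exact DFunLike.congr_fun this F

/-- The embedding of scalars in the fraction field. -/
def phi : P4 →+* FractionRing P4 := algebraMap P4 (FractionRing P4)

lemma phi_inj : Function.Injective phi := IsFractionRing.injective P4 (FractionRing P4)

lemma phi_C (n : ℤ) : phi (C (q ^ n)) = (phi (C q)) ^ n := by
  have := map_zpow₀ (phi.comp (C : K →+* P4)) q n
  exact this

lemma phi_q_ne : phi (C q) ≠ 0 := by
  rw [Ne, map_eq_zero_iff phi phi_inj, C_eq_zero]
  exact q_ne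

/-- The E24 expression. -/
def E24 (b c : ℤ) (F : P4) : P4 :=
    (C (q ^ (-2 * (b + 2 * c))) * wP * yP * zP - 1) * F
    + (1 - wP) * scl 0 0 0 (-2) F
    - C (q ^ (-2 * b)) * wP * (zP - 1) * scl 0 2 (-4) 0 F
    - C (q ^ (-2 * (b + 2 * c))) * wP * (yP - 1) * zP
        * scl 4 (-2) 0 0 F

lemma E24_scl (b c : ℤ) (F : P4) (h : E24 b c F = 0) (i j k l : ℤ) :
    phi (scl i j k l (E24 b c F)) = 0 := by
  rw [h]; simp

lemma zexp1 {L : Type*} [Field L] {t : L} (ht : t ≠ 0) (b : ℤ) :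
   t ^ (4 * b) = (t ^ b) ^ 4 ∧ t ^ (6 * b) = (t ^ b) ^ 6 ∧ t ^ (-2 * b) = ((t ^ b) ^ 2)⁻¹
   ∧ t ^ (-2 * (b+1)) = ((t ^ b) ^ 2 * t ^ 2)⁻¹ := by
  refine ⟨?_, ?_, ?_, ?_⟩
  · rw [mul_comm, zpow_mul]; norm_cast
  · rw [mul_comm, zpow_mul]; norm_cast
  · rw [mul_comm, zpow_mul, zpow_neg]; norm_cast
  · rw [mul_comm, zpow_mul, zpow_neg, zpow_add₀ ht, zpow_one, mul_zpow]; norm_cast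

lemma step1 (b : ℕ) (h : E24 b 0 (Qb0 b) = 0) : E24 ((b : ℤ) + 1) 0 (Qb0 (b + 1)) = 0 := by
  apply phi_inj
  have h1 := E24_scl _ _ _ h 0 0 (-4) 0
  have h2 := E24_scl _ _ _ h 0 (-2) 0 0
  have h3 := E24_scl _ _ _ h 0 (-2) 0 (-2)
  have h4 := E24_scl _ _ _ h (-4) 2 (-4) 0
  have h5 := E24_scl _ _ _ h (-4) 0 0 (-2)
  clear h
  rw [Qb0]
  generalize Qb0 b = F at *
  have ht := phi_q_ne
  obtain ⟨e1, e2, e3, e4⟩ := zexp1 ht (b : ℤ)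
  have hB : phi (C q) ^ (b : ℤ) ≠ 0 := zpow_ne_zero _ ht
  simp only [E24, map_add, map_sub, map_mul, map_one, map_zero, scl_x, scl_y, scl_z, scl_w, scl_C, scl_scl,
    phi_C, mul_zero, add_zero, e1, e2, e3, e4] at h1 h2 h3 h4 h5 ⊢
  norm_num only at h1 h2 h3 h4 h5 ⊢
  generalize phi (C q) ^ (b : ℤ) = B at *
  generalize phi (C q) = t at *
  generalize phi xP = x at *
  generalize phi yP = y at *
  generalize phi zP = z at *
  generalize phi wP = w at *
  have z2 : t ^ (-2 : ℤ) = (t ^ 2)⁻¹ := by rw [zpow_neg]; norm_cast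
  have z4 : t ^ (-4 : ℤ) = (t ^ 4)⁻¹ := by rw [zpow_neg]; norm_cast
  have p2 : t ^ (2 : ℤ) = t ^ 2 := by norm_cast
  have p4 : t ^ (4 : ℤ) = t ^ 4 := by norm_cast
  simp only [z2, z4, p2, p4, zpow_zero, one_mul] at h1 h2 h3 h4 h5 ⊢
  linear_combination (norm := (field_simp; ring)) (B ^ 4 * w * y * (z - 1)) * h1
    + (B ^ 4 * w * x * (y - 1) * y * z) * h2
    + (B ^ 6 * (w - 1) * (y - 1)) * h3
    + (B ^ 4 * w * (x - 1) * y * (z - 1)) * h4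
    + (B ^ 6 * (w - 1) * (x - 1) * y) * h5

lemma zexp2 {L : Type*} [Field L] {t : L} (ht : t ≠ 0) (b c : ℤ) :
   t ^ (4 * b + 8 * c) = (t ^ b) ^ 4 * (t ^ c) ^ 8
   ∧ t ^ (4 * b + 4 * c - 2) = (t ^ b) ^ 4 * (t ^ c) ^ 4 * (t ^ 2)⁻¹
   ∧ t ^ (2 * b + 4 * c + 4) = (t ^ b) ^ 2 * (t ^ c) ^ 4 * t ^ 4
   ∧ t ^ (6 * b + 8 * c) = (t ^ b) ^ 6 * (t ^ c) ^ 8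
   ∧ t ^ (4 * b + 8 * c - 2) = (t ^ b) ^ 4 * (t ^ c) ^ 8 * (t ^ 2)⁻¹
   ∧ t ^ (6 * b + 8 * c - 2) = (t ^ b) ^ 6 * (t ^ c) ^ 8 * (t ^ 2)⁻¹
   ∧ t ^ (-2 * b) = ((t ^ b) ^ 2)⁻¹
   ∧ t ^ (-2 * (b + 2 * c)) = ((t ^ b) ^ 2 * (t ^ c) ^ 4)⁻¹
   ∧ t ^ (-2 * (b + 2 * (c + 1))) = ((t ^ b) ^ 2 * (t ^ c) ^ 4 * t ^ 4)⁻¹ := by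
  have key : ∀ i j k : ℤ, t ^ (i * b + j * c + k) = (t ^ b) ^ i * (t ^ c) ^ j * t ^ k := by
    intro i j k
    rw [zpow_add₀ ht, zpow_add₀ ht, mul_comm i, mul_comm j, zpow_mul, zpow_mul]
  refine ⟨?_, ?_, ?_, ?_, ?_, ?_, ?_, ?_, ?_⟩
  · have := key 4 8 0
    rw [add_zero, zpow_zero, mul_one] at this
    rw [this]; norm_cast
  · have := key 4 4 (-2)
    rw [zpow_neg] at this
    rw [sub_eq_add_neg, this]; norm_cast
  · have := key 2 4 4
    rw [this]; norm_cast
  · have := key 6 8 0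
    rw [add_zero, zpow_zero, mul_one] at this
    rw [this]; norm_cast
  · have := key 4 8 (-2)
    rw [zpow_neg] at this
    rw [sub_eq_add_neg, this]; norm_cast
  · have := key 6 8 (-2)
    rw [zpow_neg] at this
    rw [sub_eq_add_neg, this]; norm_cast
  · rw [mul_comm, zpow_mul, zpow_neg]; norm_cast
  · have := key (-2) (-4) 0
    rw [zpow_neg, zpow_neg] at this
    rw [show -2 * (b + 2 * c) = -2 * b + -4 * c + 0 by ring, this, zpow_zero, mul_one, mul_inv]
    norm_cast
  · have := key (-2) (-4) (-4)
    rw [zpow_neg, zpow_neg, zpow_neg] at this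
    rw [show -2 * (b + 2 * (c + 1)) = -2 * b + -4 * c + -4 by ring, this, mul_inv, mul_inv]
    norm_cast

lemma step2 (b c : ℕ) (h : E24 b c (Q b c) = 0) : E24 b ((c : ℤ) + 1) (Q b (c + 1)) = 0 := by
  apply phi_inj
  have h1 := E24_scl _ _ _ h 0 0 (-4) 0
  have h2 := E24_scl _ _ _ h 0 (-2) 0 0
  have h3 := E24_scl _ _ _ h 0 (-2) 0 (-2)
  have h4 := E24_scl _ _ _ h (-4) 2 (-4) 0
  have h5 := E24_scl _ _ _ h (-4) 0 0 (-2)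
  clear h
  rw [Q]
  generalize Q b c = F at *
  have ht := phi_q_ne
  obtain ⟨e1, e2, e3, e4, e5, e6, e7, e8, e9⟩ := zexp2 ht (b : ℤ) (c : ℤ)
  have hB : phi (C q) ^ (b : ℤ) ≠ 0 := zpow_ne_zero _ ht
  have hD : phi (C q) ^ (c : ℤ) ≠ 0 := zpow_ne_zero _ ht
  simp only [E24, map_add, map_sub, map_mul, map_pow, map_neg, map_one, map_zero, scl_x, scl_y, scl_z,
    scl_w, scl_C, scl_scl, phi_C, e1, e2, e3, e4, e5, e6, e7, e8, e9] at h1 h2 h3 h4 h5 ⊢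
  norm_num only at h1 h2 h3 h4 h5 ⊢
  generalize phi (C q) ^ (b : ℤ) = B at *
  generalize phi (C q) ^ (c : ℤ) = D at *
  generalize phi (C q) = t at *
  generalize phi xP = x at *
  generalize phi yP = y at *
  generalize phi zP = z at *
  generalize phi wP = w at *
  have z2 : t ^ (-2 : ℤ) = (t ^ 2)⁻¹ := by rw [zpow_neg]; norm_cast
  have z4 : t ^ (-4 : ℤ) = (t ^ 4)⁻¹ := by rw [zpow_neg]; norm_cast
  have p2 : t ^ (2 : ℤ) = t ^ 2 := by norm_cast
  have p4 : t ^ (4 : ℤ) = t ^ 4 := by norm_cast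
  simp only [z2, z4, p2, p4, zpow_zero, one_mul] at h1 h2 h3 h4 h5 ⊢
  linear_combination (norm := (field_simp; ring)) (-(B ^ 4 * D ^ 8 * w ^ 2 * y * (z - 1) * z) * (t ^ 2)⁻¹) * h1
    + (B ^ 4 * D ^ 4 * (t ^ 2)⁻¹ * w * x * (y - 1) * z * (B ^ 2 * D ^ 4 * t ^ 4 - w * y * z)) * h2
    - (B ^ 6 * D ^ 8 * (w - 1) * w * (y - 1) * z * (t ^ 2)⁻¹) * h3
    + (B ^ 4 * D ^ 8 * (t ^ 2)⁻¹ * w * (x - 1) * (z - 1) * (B ^ 2 * D ^ 4 * t ^ 4 - w * y * z)) * h4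
    + (B ^ 6 * D ^ 8 * (t ^ 2)⁻¹ * (w - 1) * (x - 1) * (B ^ 2 * D ^ 4 * t ^ 4 - w * y * z)) * h5

lemma E24_Q (b c : ℕ) : E24 b c (Q b c) = 0 := by
  induction c with
  | zero =>
    rw [Q]
    push_cast
    induction b with
    | zero => simp [E24, Qb0]; ring
    | succ b ih => push_cast; exact step1 b ih
  | succ c ih => push_cast; exact step2 b c ih

/-- the q-difference equation E24 for `Q_{b,c}`. -/
theorem Q_E24 (b c : ℕ) :
    (C (q ^ (-2 * ((b : ℤ) + 2 * (c : ℤ)))) * wP * yP * zP - 1) * Q b c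
    + (1 - wP) * scl 0 0 0 (-2) (Q b c)
    - C (q ^ (-2 * (b : ℤ))) * wP * (zP - 1) * scl 0 2 (-4) 0 (Q b c)
    - C (q ^ (-2 * ((b : ℤ) + 2 * (c : ℤ)))) * wP * (yP - 1) * zP
        * scl 4 (-2) 0 0 (Q b c) = 0 := by
  exact E24_Q b c
end
end

section
/- For all (b,c) ∈ ℤ_{≥0}², every coefficient of Q_{b,c} (an element of K = ℚ(q)) lies in the subring ℤ[q²]; that is, each coefficient is the image in K of a polynomial in q with integer coefficients in which only even powers of q occur. -/
noncomputable section

open MvPolynomial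

/-! ### Valuation bound -/

/-- Twice the (conjecturally exact) `q²`-adic valuation of the coefficient of `x^i y^j z^k w^l`
in `Q_{b,c}`. -/
def Vf (b c i j k l : ℤ) : ℤ :=
  ((b - j - l + 2 * k) + 2 * (j - i - k + c) + (2 * i - j))
      * ((b - j - l + 2 * k) + 2 * (j - i - k + c) + (2 * i - j) - 1)
    + 4 * ((b - j - l + 2 * k) + 2 * (j - i - k + c) + (2 * i - j)) * (l - k)
    + 2 * (l - k) * (l - k - 1)
    + 2 * (j - i - k + c) * (j - i - k + c - 1)
    + 2 * (b - j - l + 2 * k)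
      * ((b - j - l + 2 * k) + 2 * (j - i - k + c) + (2 * i - j) - 1)

def Supp (b c i j k l : ℤ) : Prop :=
  0 ≤ i ∧ 0 ≤ j ∧ 0 ≤ k ∧ j ≤ 2 * i ∧ 0 ≤ j - i - k + c ∧ k ≤ l ∧ j + l - 2 * k ≤ b

/-- The defect condition: `D ≥ 0` up to an allowed loss `2 s n`. -/
def PG (c g k D : ℤ) : Prop :=
  0 ≤ D ∨ ∃ s n : ℤ, 0 ≤ s ∧ s ≤ c ∧ 0 ≤ n ∧ n ≤ g ∧ s + n ≤ g - k + c ∧ 0 ≤ D + 2 * (s * n)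

def Good (b c i j k l e : ℤ) : Prop :=
  Supp b c i j k l ∧ PG c (l - k) k (2 * e - Vf b c i j k l)

lemma PG_T0 {c g k D g' k' D' : ℤ} (h : PG c g k D) (hg : g ≤ g') (hk : k' - g' ≤ k - g + 1)
    (hD : D ≤ D') : PG (c + 1) g' k' D' := by
  rcases h with h | ⟨s, n, h1, h2, h3, h4, h5, h6⟩
  · left; linarith
  · right; exact ⟨s, n, h1, by linarith, h3, by linarith, by linarith, by linarith⟩

lemma PG_T1 {c g k D g' D' : ℤ} (h : PG c g k D) (hc : 0 ≤ c) (hk : 0 ≤ k) (hg0 : 0 ≤ g)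
    (hg : g ≤ g') (hD : D - 2 * (g' - k) ≤ D') : PG (c + 1) g' k D' := by
  by_cases hn : g' - k ≤ 0
  · exact PG_T0 h hg (by linarith) (by linarith)
  · rcases h with h | ⟨s, n, h1, h2, h3, h4, h5, h6⟩
    · right
      exact ⟨1, g' - k, by norm_num, by linarith, by linarith, by linarith, by linarith,
        by linarith⟩
    · right
      by_cases hn2 : g' - k ≤ n
      · refine ⟨s + 1, n, by linarith, by linarith, h3, by linarith, by linarith, ?_⟩
        linarith [add_mul s 1 n]
      · refine ⟨s + 1, g' - k, by linarith, by linarith, by linarith, by linarith, by linarith, ?_⟩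
        have : s * n ≤ s * (g' - k) := mul_le_mul_of_nonneg_left (by linarith) h1
        linarith [add_mul s 1 (g' - k)]

lemma PG_T2 {c g k D k' D' : ℤ} (h : PG c g k D) (hg0 : 0 ≤ g) (hk : k' = k + 2)
    (hD : D + 2 * g ≤ D') : PG (c + 1) g k' D' := by
  subst hk
  rcases h with h | ⟨s, n, h1, h2, h3, h4, h5, h6⟩
  · left; linarith
  · by_cases hs : s = 0
    · subst hs; left; linarith
    · right
      have : 1 ≤ s := by omega
      refine ⟨s - 1, n, by linarith, by linarith, h3, h4, by linarith, ?_⟩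
      linarith [sub_mul s 1 n]

lemma Good_nonneg {b c i j k l e : ℤ} (h : Good b c i j k l e) : 0 ≤ e := by
  obtain ⟨⟨hi, hj, hk, h1, h2, h3, h4⟩, hp⟩ := h
  have prodpred : ∀ x y : ℤ, 0 ≤ x → x ≤ y → 0 ≤ x * (y - 1) := by
    intro x y hx hy
    rcases hx.eq_or_lt with h | h
    · simp [← h]
    · exact mul_nonneg hx (by omega)
  obtain ⟨M, hM⟩ : ∃ M, M = (b - j - l + 2 * k) + 2 * (j - i - k + c) + (2 * i - j) := ⟨_, rfl⟩
  have hV : Vf b c i j k l = M * (M - 1) + 4 * (M * (l - k)) + 2 * ((l - k) * (l - k - 1))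
      + 2 * ((j - i - k + c) * (j - i - k + c - 1)) + 2 * ((b - j - l + 2 * k) * (M - 1)) := by
    unfold Vf; rw [← hM]; ring
  have hM0 : 0 ≤ M := by linarith
  have a1 := prodpred M M hM0 le_rfl
  have a2 := prodpred (l - k) (l - k) (by linarith) le_rfl
  have a3 := prodpred _ _ h2 le_rfl
  have a4 := prodpred (b - j - l + 2 * k) M (by linarith) (by linarith)
  have a5 : 0 ≤ M * (l - k) := mul_nonneg hM0 (by linarith)
  rcases hp with hp | ⟨s, n, g1, g2, g3, g4, g5, g6⟩
  · linarith
  · have b1 : s * n ≤ (M + (l - k) - n) * n :=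
      mul_le_mul_of_nonneg_right (by linarith) g3
    have b2 : (M + (l - k) - n) * n ≤ M * (l - k) + (l - k) * (l - k - 1) := by
      have b3 : M * n ≤ M * (l - k) := mul_le_mul_of_nonneg_left g4 hM0
      rcases g3.eq_or_lt with hn | hn
      · rw [← hn]; simp; linarith
      · have b4 : n * (l - k - n) ≤ (l - k) * (l - k - 1) :=
          mul_le_mul g4 (by omega) (by linarith) (by linarith)
        linarith
    linarith

/-- The monomial `q^{2e} x^i y^j z^k w^l`. -/
def U (i j k l : ℕ) (e : ℤ) : P4 := C (q ^ (2 * e)) * (xP ^ i * yP ^ j * zP ^ k * wP ^ l)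

/-- Power of `q` as a constant polynomial. -/
def T (n : ℤ) : P4 := C (q ^ n)

lemma T_add (m n : ℤ) : T (m + n) = T m * T n := by
  unfold T; rw [zpow_add₀ q_ne, map_mul]

lemma C_eq_T (n : ℤ) : (C (q ^ n) : P4) = T n := rfl

lemma U_eq (i j k l a b' c' d : ℕ) (e A : ℤ) :
    U (i + a) (j + b') (k + c') (l + d) (e + A)
      = T (2 * A) * (xP ^ a * yP ^ b' * zP ^ c' * wP ^ d) * U i j k l e := by
  unfold U
  rw [C_eq_T, C_eq_T, mul_add, T_add]
  ring

lemma scl_U (A B G D : ℤ) (i j k l : ℕ) (e : ℤ) :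
    scl A B G D (U i j k l e) = T (A * i + B * j + G * k + D * l) * U i j k l e := by
  have hp : ∀ (n : ℤ) (m : ℕ), (T n) ^ m = T (n * m) := by
    intro n m; unfold T; rw [← map_pow, zpow_mul, zpow_natCast]
  have hC : ∀ a : K, scl A B G D (C a) = C a := fun a => by
    simp [scl]
  have hx : scl A B G D xP = T A * xP := by simp [scl, xP, T]
  have hy : scl A B G D yP = T B * yP := by simp [scl, yP, T]
  have hz : scl A B G D zP = T G * zP := by simp [scl, zP, T]
  have hw : scl A B G D wP = T D * wP := by simp [scl, wP, T]
  unfold U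
  rw [map_mul, hC, map_mul, map_mul, map_mul, map_pow, map_pow, map_pow, map_pow, hx, hy, hz, hw,
    mul_pow, mul_pow, mul_pow, mul_pow, hp, hp, hp, hp, T_add, T_add, T_add]
  ring

def Gen (G : ℤ → ℤ → ℤ → ℤ → ℤ → Prop) : Set P4 :=
  {P | ∃ (i j k l : ℕ) (e : ℤ), G i j k l e ∧ P = U i j k l e}

/-- Basic membership. -/
lemma mem1 {G : ℤ → ℤ → ℤ → ℤ → ℤ → Prop} {i j k l : ℕ} {e : ℤ} (a b' c' d : ℕ) (A : ℤ)
    (h : G (i + a) (j + b') (k + c') (l + d) (e + A)) :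
    T (2 * A) * (xP ^ a * yP ^ b' * zP ^ c' * wP ^ d) * U i j k l e
      ∈ AddSubgroup.closure (Gen G) := by
  rw [← U_eq]
  exact AddSubgroup.subset_closure ⟨_, _, _, _, _, by push_cast; exact h, rfl⟩

/-- Membership of a difference, which vanishes when the exponents agree. -/
lemma mem2 {G : ℤ → ℤ → ℤ → ℤ → ℤ → Prop} {i j k l : ℕ} {e : ℤ} (a b' c' d : ℕ) (A B : ℤ)
    (h : A ≠ B → G (i + a) (j + b') (k + c') (l + d) (e + A) ∧
      G (i + a) (j + b') (k + c') (l + d) (e + B)) :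
    (T (2 * A) - T (2 * B)) * (xP ^ a * yP ^ b' * zP ^ c' * wP ^ d) * U i j k l e
      ∈ AddSubgroup.closure (Gen G) := by
  by_cases hAB : A = B
  · subst hAB; simp
  · obtain ⟨h1, h2⟩ := h hAB
    rw [sub_mul, sub_mul]
    exact sub_mem (mem1 _ _ _ _ _ h1) (mem1 _ _ _ _ _ h2)

/-- Membership of a product of two differences. -/
lemma mem4 {G : ℤ → ℤ → ℤ → ℤ → ℤ → Prop} {i j k l : ℕ} {e : ℤ} (a b' c' d : ℕ) (A B r : ℤ)
    (h : A ≠ B → r ≠ 0 → G (i + a) (j + b') (k + c') (l + d) (e + A) ∧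
      G (i + a) (j + b') (k + c') (l + d) (e + B) ∧
      G (i + a) (j + b') (k + c') (l + d) (e + (A + r)) ∧
      G (i + a) (j + b') (k + c') (l + d) (e + (B + r))) :
    (T (2 * A) - T (2 * B) - T (2 * (A + r)) + T (2 * (B + r)))
        * (xP ^ a * yP ^ b' * zP ^ c' * wP ^ d) * U i j k l e
      ∈ AddSubgroup.closure (Gen G) := by
  by_cases hAB : A = B
  · subst hAB; simp
  by_cases hr : r = 0
  · subst hr; simp
  obtain ⟨h1, h2, h3, h4⟩ := h hAB hr
  rw [add_mul, sub_mul, sub_mul, add_mul, sub_mul, sub_mul]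
  exact add_mem (sub_mem (sub_mem (mem1 _ _ _ _ _ h1) (mem1 _ _ _ _ _ h2)) (mem1 _ _ _ _ _ h3))
    (mem1 _ _ _ _ _ h4)

/-! ### The recursion in `b` -/

def stepB (b : ℤ) (P : P4) : P4 :=
      C (q ^ (4 * b)) * wP * yP * (zP - 1) * scl 0 0 (-4) 0 P
    + C (q ^ (4 * b)) * wP * xP * (yP - 1) * yP * zP * scl 0 (-2) 0 0 P
    + C (q ^ (6 * b)) * (wP - 1) * (yP - 1) * scl 0 (-2) 0 (-2) P
    + C (q ^ (4 * b)) * wP * (xP - 1) * yP * (zP - 1) * scl (-4) 2 (-4) 0 P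
    + C (q ^ (6 * b)) * (wP - 1) * (xP - 1) * yP * scl (-4) 0 0 (-2) P

def GoodB (b i j k l e : ℤ) : Prop := Supp b 0 i j k l ∧ 0 ≤ 2 * e - Vf b 0 i j k l

lemma TT {m n p : ℤ} (h : m + n = p) : T m * T n = T p := by rw [← h, T_add]

lemma stepB_gen (b : ℤ) (i j k l : ℕ) (e : ℤ) (h : GoodB b i j k l e) :
    stepB b (U i j k l e) ∈ AddSubgroup.closure (Gen (GoodB (b + 1))) := by
  obtain ⟨⟨hi, hj, hk, s1, s2, s3, s4⟩, hD⟩ := h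
  have key : stepB b (U i j k l e) =
      (T (2 * (2 * b - 2 * k)) - T (2 * (2 * b - 2 * k + j - 2 * i)))
        * (xP ^ 0 * yP ^ 1 * zP ^ 1 * wP ^ 1) * U i j k l e
    - (T (2 * (2 * b - 2 * k)) - T (2 * (3 * b - j - l))
        - T (2 * (2 * b - 2 * k + (j - 2 * i))) + T (2 * (3 * b - j - l + (j - 2 * i))))
        * (xP ^ 0 * yP ^ 1 * zP ^ 0 * wP ^ 1) * U i j k l e
    + (T (2 * (3 * b - 2 * i - l)) - T (2 * (3 * b - j - l)))
        * (xP ^ 0 * yP ^ 1 * zP ^ 0 * wP ^ 0) * U i j k l e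
    + (T (2 * (2 * b - 2 * k + j - 2 * i)) - T (2 * (2 * b - j)))
        * (xP ^ 1 * yP ^ 1 * zP ^ 1 * wP ^ 1) * U i j k l e
    + T (2 * (2 * b - j)) * (xP ^ 1 * yP ^ 2 * zP ^ 1 * wP ^ 1) * U i j k l e
    + (T (2 * (3 * b - 2 * i - l)) - T (2 * (2 * b - 2 * k + j - 2 * i)))
        * (xP ^ 1 * yP ^ 1 * zP ^ 0 * wP ^ 1) * U i j k l e
    - T (2 * (3 * b - 2 * i - l)) * (xP ^ 1 * yP ^ 1 * zP ^ 0 * wP ^ 0) * U i j k l e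
    - T (2 * (3 * b - j - l)) * (xP ^ 0 * yP ^ 0 * zP ^ 0 * wP ^ 1) * U i j k l e
    + T (2 * (3 * b - j - l)) * (xP ^ 0 * yP ^ 0 * zP ^ 0 * wP ^ 0) * U i j k l e := by
    unfold stepB
    simp only [scl_U, C_eq_T]
    have e1 : T (2 * (2 * b - 2 * k + (j - 2 * i))) = T (2 * (2 * b - 2 * k + j - 2 * i)) := by
      congr 1; ring
    have e2 : T (2 * (3 * b - j - l + (j - 2 * i))) = T (2 * (3 * b - 2 * i - l)) := by
      congr 1; ring
    rw [e1, e2,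
      ← TT (show 4 * b + (0 * (i : ℤ) + 0 * j + -4 * k + 0 * l) = 2 * (2 * b - 2 * k) by ring),
      ← TT (show 4 * b + (0 * (i : ℤ) + -2 * j + 0 * k + 0 * l) = 2 * (2 * b - j) by ring),
      ← TT (show 6 * b + (0 * (i : ℤ) + -2 * j + 0 * k + -2 * l) = 2 * (3 * b - j - l) by ring),
      ← TT (show 4 * b + (-4 * (i : ℤ) + 2 * j + -4 * k + 0 * l)
        = 2 * (2 * b - 2 * k + j - 2 * i) by ring),
      ← TT (show 6 * b + (-4 * (i : ℤ) + 0 * j + 0 * k + -2 * l)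
        = 2 * (3 * b - 2 * i - l) by ring)]
    ring
  rw [key]
  refine add_mem (sub_mem (sub_mem (add_mem (add_mem (add_mem (add_mem (sub_mem
    (mem2 _ _ _ _ _ _ ?_) (mem4 _ _ _ _ _ _ _ ?_)) (mem2 _ _ _ _ _ _ ?_)) (mem2 _ _ _ _ _ _ ?_))
    (mem1 _ _ _ _ _ ?_)) (mem2 _ _ _ _ _ _ ?_)) (mem1 _ _ _ _ _ ?_)) (mem1 _ _ _ _ _ ?_))
    (mem1 _ _ _ _ _ ?_)
  · intro hne
    have f1 : (j : ℤ) + 1 ≤ 2 * i := by omega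
    refine ⟨⟨?_, ?_⟩, ⟨?_, ?_⟩⟩
    all_goals first
      | (unfold Supp; push_cast; omega)
      | (unfold Vf at *; push_cast; linarith)
  · intro hne hne2
    have f1 : (j : ℤ) + 1 ≤ 2 * i := by omega
    have f2 : (j : ℤ) + l - 2 * k + 1 ≤ b := by omega
    refine ⟨⟨?_, ?_⟩, ⟨?_, ?_⟩, ⟨?_, ?_⟩, ⟨?_, ?_⟩⟩
    all_goals first
      | (unfold Supp; push_cast; omega)
      | (unfold Vf at *; push_cast; linarith)
  · intro hne
    have f1 : (j : ℤ) + 1 ≤ 2 * i := by omega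
    refine ⟨⟨?_, ?_⟩, ⟨?_, ?_⟩⟩
    all_goals first
      | (unfold Supp; push_cast; omega)
      | (unfold Vf at *; push_cast; linarith)
  · intro hne
    have f1 : (1 : ℤ) ≤ j - i - k := by omega
    refine ⟨⟨?_, ?_⟩, ⟨?_, ?_⟩⟩
    all_goals first
      | (unfold Supp; push_cast; omega)
      | (unfold Vf at *; push_cast; linarith)
  · refine ⟨?_, ?_⟩
    all_goals first
      | (unfold Supp; push_cast; omega)
      | (unfold Vf at *; push_cast; linarith)
  · intro hne
    have f2 : (j : ℤ) + l - 2 * k + 1 ≤ b := by omega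
    refine ⟨⟨?_, ?_⟩, ⟨?_, ?_⟩⟩
    all_goals first
      | (unfold Supp; push_cast; omega)
      | (unfold Vf at *; push_cast; linarith)
  all_goals
    refine ⟨?_, ?_⟩
    all_goals first
      | (unfold Supp; push_cast; omega)
      | (unfold Vf at *; push_cast; linarith)

/-! ### The recursion in `c` -/

def stepC (b c : ℤ) (P : P4) : P4 :=
      - (C (q ^ (4 * b + 8 * c)) * wP ^ 2 * yP * (zP - 1) * zP)
          * scl 0 0 (-4) 0 P
    + (C (q ^ (4 * b + 4 * c - 2)) * wP * xP * (yP - 1) * zP)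
          * (C (q ^ (2 * b + 4 * c + 4)) - C (q ^ (2 : ℤ)) * wP * yP * zP)
          * scl 0 (-2) 0 0 P
    - (C (q ^ (6 * b + 8 * c)) * (wP - 1) * wP * (yP - 1) * zP)
          * scl 0 (-2) 0 (-2) P
    + (C (q ^ (4 * b + 8 * c - 2)) * wP * (xP - 1) * (zP - 1))
          * (C (q ^ (2 * b + 4 * c + 4)) - C (q ^ (2 : ℤ)) * wP * yP * zP)
          * scl (-4) 2 (-4) 0 P
    + (C (q ^ (6 * b + 8 * c - 2)) * (wP - 1) * (xP - 1))
          * (C (q ^ (2 * b + 4 * c + 4)) - C (q ^ (2 : ℤ)) * wP * yP * zP)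
          * scl (-4) 0 0 (-2) P

lemma TTT {m n o p : ℤ} (h : m + n + o = p) : T m * T n * T o = T p := by
  rw [← h, T_add, T_add]

lemma stepC_key (b c : ℤ) (i j k l : ℕ) (e : ℤ) : stepC b c (U i j k l e) =
      T (2 * (4 * b + 6 * c + 1 - 2 * i - l))
        * (xP ^ 0 * yP ^ 0 * zP ^ 0 * wP ^ 0) * U i j k l e
    - T (2 * (4 * b + 6 * c + 1 - 2 * i - l))
        * (xP ^ 1 * yP ^ 0 * zP ^ 0 * wP ^ 0) * U i j k l e
    + (T (2 * (3 * b + 6 * c + 1 + j - 2 * i - 2 * k)) - T (2 * (4 * b + 6 * c + 1 - 2 * i - l)))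
        * (xP ^ 0 * yP ^ 0 * zP ^ 0 * wP ^ 1) * U i j k l e
    - (T (2 * (3 * b + 6 * c + 1 + j - 2 * i - 2 * k)) - T (2 * (4 * b + 6 * c + 1 - 2 * i - l)))
        * (xP ^ 1 * yP ^ 0 * zP ^ 0 * wP ^ 1) * U i j k l e
    + (T (2 * (3 * b + 6 * c + 1 + j - 2 * i - 2 * k)) - T (2 * (3 * b + 4 * c + 1 - j)))
        * (xP ^ 1 * yP ^ 0 * zP ^ 1 * wP ^ 1) * U i j k l e
    - T (2 * (3 * b + 6 * c + 1 + j - 2 * i - 2 * k))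
        * (xP ^ 0 * yP ^ 0 * zP ^ 1 * wP ^ 1) * U i j k l e
    - T (2 * (3 * b + 4 * c - j - l))
        * (xP ^ 0 * yP ^ 0 * zP ^ 1 * wP ^ 1) * U i j k l e
    + T (2 * (3 * b + 4 * c + 1 - j))
        * (xP ^ 1 * yP ^ 1 * zP ^ 1 * wP ^ 1) * U i j k l e
    + T (2 * (3 * b + 4 * c - 2 * i - l))
        * (xP ^ 1 * yP ^ 1 * zP ^ 1 * wP ^ 1) * U i j k l e
    - T (2 * (2 * b + 2 * c - j))
        * (xP ^ 1 * yP ^ 2 * zP ^ 2 * wP ^ 2) * U i j k l e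
    + (T (2 * (2 * b + 2 * c - j)) - T (2 * (2 * b + 4 * c + j - 2 * i - 2 * k)))
        * (xP ^ 1 * yP ^ 1 * zP ^ 2 * wP ^ 2) * U i j k l e
    + (T (2 * (2 * b + 4 * c + j - 2 * i - 2 * k)) - T (2 * (2 * b + 4 * c - 2 * k)))
        * (xP ^ 0 * yP ^ 1 * zP ^ 2 * wP ^ 2) * U i j k l e
    + (T (2 * (2 * b + 4 * c - 2 * k)) - T (2 * (3 * b + 4 * c - j - l))
        - T (2 * (2 * b + 4 * c - 2 * k + (j - 2 * i)))
        + T (2 * (3 * b + 4 * c - j - l + (j - 2 * i))))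
        * (xP ^ 0 * yP ^ 1 * zP ^ 1 * wP ^ 2) * U i j k l e
    + T (2 * (3 * b + 4 * c - j - l))
        * (xP ^ 0 * yP ^ 0 * zP ^ 1 * wP ^ 2) * U i j k l e
    + (T (2 * (2 * b + 4 * c + j - 2 * i - 2 * k)) - T (2 * (3 * b + 4 * c - 2 * i - l)))
        * (xP ^ 1 * yP ^ 1 * zP ^ 1 * wP ^ 2) * U i j k l e
    + (T (2 * (3 * b + 4 * c - j - l)) - T (2 * (3 * b + 4 * c - 2 * i - l)))
        * (xP ^ 0 * yP ^ 1 * zP ^ 1 * wP ^ 1) * U i j k l e := by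
  unfold stepC
  simp only [scl_U, C_eq_T]
  have e1 : T (2 * (2 * b + 4 * c - 2 * k + (j - 2 * i)))
      = T (2 * (2 * b + 4 * c + j - 2 * i - 2 * k)) := by
    congr 1; ring
  have e2 : T (2 * (3 * b + 4 * c - j - l + (j - 2 * i)))
      = T (2 * (3 * b + 4 * c - 2 * i - l)) := by
    congr 1; ring
  rw [e1, e2,
    ← TTT (show 6 * b + 8 * c - 2 + (2 * b + 4 * c + 4)
      + (-4 * (i : ℤ) + 0 * j + 0 * k + -2 * l) = 2 * (4 * b + 6 * c + 1 - 2 * i - l) by ring),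
    ← TTT (show 6 * b + 8 * c - 2 + 2
      + (-4 * (i : ℤ) + 0 * j + 0 * k + -2 * l) = 2 * (3 * b + 4 * c - 2 * i - l) by ring),
    ← TTT (show 4 * b + 8 * c - 2 + (2 * b + 4 * c + 4)
      + (-4 * (i : ℤ) + 2 * j + -4 * k + 0 * l)
        = 2 * (3 * b + 6 * c + 1 + j - 2 * i - 2 * k) by ring),
    ← TTT (show 4 * b + 8 * c - 2 + 2
      + (-4 * (i : ℤ) + 2 * j + -4 * k + 0 * l)
        = 2 * (2 * b + 4 * c + j - 2 * i - 2 * k) by ring),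
    ← TTT (show 4 * b + 4 * c - 2 + (2 * b + 4 * c + 4)
      + (0 * (i : ℤ) + -2 * j + 0 * k + 0 * l) = 2 * (3 * b + 4 * c + 1 - j) by ring),
    ← TTT (show 4 * b + 4 * c - 2 + 2
      + (0 * (i : ℤ) + -2 * j + 0 * k + 0 * l) = 2 * (2 * b + 2 * c - j) by ring),
    ← TT (show 4 * b + 8 * c + (0 * (i : ℤ) + 0 * j + -4 * k + 0 * l)
      = 2 * (2 * b + 4 * c - 2 * k) by ring),
    ← TT (show 6 * b + 8 * c + (0 * (i : ℤ) + -2 * j + 0 * k + -2 * l)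
      = 2 * (3 * b + 4 * c - j - l) by ring)]
  ring

/-- Steps whose monomial contains `z` exactly once. -/
lemma Good_T0 {b c i j k l e i' j' k' l' e' : ℤ} (h : Good b c i j k l e)
    (hS : Supp b (c + 1) i' j' k' l') (hg : l - k ≤ l' - k') (hk : k' = k + 1)
    (hD : 2 * e - Vf b c i j k l ≤ 2 * e' - Vf b (c + 1) i' j' k' l') :
    Good b (c + 1) i' j' k' l' e' :=
  ⟨hS, PG_T0 h.2 hg (by linarith) hD⟩

/-- Steps whose monomial does not contain `z`. -/
lemma Good_T1 {b c i j k l e i' j' k' l' e' : ℤ} (h : Good b c i j k l e) (hc : 0 ≤ c)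
    (hS : Supp b (c + 1) i' j' k' l') (hg : l ≤ l') (hk : k' = k)
    (hD : 2 * e - Vf b c i j k l - 2 * (l' - k - k) ≤ 2 * e' - Vf b (c + 1) i' j' k' l') :
    Good b (c + 1) i' j' k' l' e' := by
  subst hk
  obtain ⟨hi, hj, hk, s1, s2, s3, s4⟩ := h.1
  exact ⟨hS, PG_T1 h.2 hc hk (by linarith) (by linarith) hD⟩

/-- Steps whose monomial contains `z²`. -/
lemma Good_T2 {b c i j k l e i' j' k' l' e' : ℤ} (h : Good b c i j k l e)
    (hS : Supp b (c + 1) i' j' k' l') (hg : l' = l + 2) (hk : k' = k + 2)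
    (hD : 2 * e - Vf b c i j k l + 2 * (l - k) ≤ 2 * e' - Vf b (c + 1) i' j' k' l') :
    Good b (c + 1) i' j' k' l' e' := by
  obtain ⟨hi, hj, hk', s1, s2, s3, s4⟩ := h.1
  have e1 : l' - k' = l - k := by linarith
  refine ⟨hS, ?_⟩
  rw [e1]
  exact PG_T2 h.2 (by linarith) hk hD

lemma stepC_gen (b c : ℤ) (hc : 0 ≤ c) (i j k l : ℕ) (e : ℤ) (h : Good b c i j k l e) :
    stepC b c (U i j k l e) ∈ AddSubgroup.closure (Gen (Good b (c + 1))) := by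
  obtain ⟨hi, hj, hk, s1, s2, s3, s4⟩ := h.1
  rw [stepC_key]
  refine add_mem (add_mem (add_mem (add_mem (add_mem (add_mem (sub_mem (add_mem (add_mem
    (sub_mem (sub_mem (add_mem (sub_mem (add_mem (sub_mem
    (mem1 _ _ _ _ _ ?_) (mem1 _ _ _ _ _ ?_)) (mem2 _ _ _ _ _ _ ?_)) (mem2 _ _ _ _ _ _ ?_))
    (mem2 _ _ _ _ _ _ ?_)) (mem1 _ _ _ _ _ ?_)) (mem1 _ _ _ _ _ ?_)) (mem1 _ _ _ _ _ ?_))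
    (mem1 _ _ _ _ _ ?_)) (mem1 _ _ _ _ _ ?_)) (mem2 _ _ _ _ _ _ ?_)) (mem2 _ _ _ _ _ _ ?_))
    (mem4 _ _ _ _ _ _ _ ?_)) (mem1 _ _ _ _ _ ?_)) (mem2 _ _ _ _ _ _ ?_)) (mem2 _ _ _ _ _ _ ?_)
  -- `1`, `x`
  · refine Good_T1 h hc ?_ (by simp) (by simp) ?_
    · unfold Supp; push_cast; omega
    · unfold Vf; push_cast; linarith
  · refine Good_T1 h hc ?_ (by simp) (by simp) ?_
    · unfold Supp; push_cast; omega
    · unfold Vf; push_cast; linarith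
  -- `w`, `wx`
  · intro hne
    have f2 : (j : ℤ) + l - 2 * k + 1 ≤ b := by omega
    constructor
    all_goals
      refine Good_T1 h hc ?_ (by simp) (by simp) ?_
      · unfold Supp; push_cast; omega
      · unfold Vf; push_cast; linarith
  · intro hne
    have f2 : (j : ℤ) + l - 2 * k + 1 ≤ b := by omega
    constructor
    all_goals
      refine Good_T1 h hc ?_ (by simp) (by simp) ?_
      · unfold Supp; push_cast; omega
      · unfold Vf; push_cast; linarith
  -- `wxz`
  · intro hne
    have f1 : (1 : ℤ) ≤ j - i - k + c := by omega
    constructor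
    all_goals
      refine Good_T0 h ?_ (by push_cast; linarith) (by simp) ?_
      · unfold Supp; push_cast; omega
      · unfold Vf; push_cast; linarith
  -- `wz`, `wxyz`
  iterate 4
    · refine Good_T0 h ?_ (by push_cast; linarith) (by simp) ?_
      · unfold Supp; push_cast; omega
      · unfold Vf; push_cast; linarith
  -- `w²xy²z²`
  · refine Good_T2 h ?_ (by simp) (by simp) ?_
    · unfold Supp; push_cast; omega
    · unfold Vf; push_cast; linarith
  -- `w²xyz²`
  · intro hne
    have f1 : (1 : ℤ) ≤ j - i - k + c := by omega
    constructor
    all_goals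
      refine Good_T2 h ?_ (by simp) (by simp) ?_
      · unfold Supp; push_cast; omega
      · unfold Vf; push_cast; linarith
  -- `w²yz²`
  · intro hne
    have f1 : (j : ℤ) + 1 ≤ 2 * i := by omega
    constructor
    all_goals
      refine Good_T2 h ?_ (by simp) (by simp) ?_
      · unfold Supp; push_cast; omega
      · unfold Vf; push_cast; linarith
  -- `w²yz`
  · intro hne hne2
    have f1 : (j : ℤ) + 1 ≤ 2 * i := by omega
    have f2 : (j : ℤ) + l - 2 * k + 1 ≤ b := by omega
    refine ⟨?_, ?_, ?_, ?_⟩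
    all_goals
      refine Good_T0 h ?_ (by push_cast; linarith) (by simp) ?_
      · unfold Supp; push_cast; omega
      · unfold Vf; push_cast; linarith
  -- `w²z`
  · refine Good_T0 h ?_ (by push_cast; linarith) (by simp) ?_
    · unfold Supp; push_cast; omega
    · unfold Vf; push_cast; linarith
  -- `w²xyz`
  · intro hne
    have f2 : (j : ℤ) + l - 2 * k + 1 ≤ b := by omega
    constructor
    all_goals
      refine Good_T0 h ?_ (by push_cast; linarith) (by simp) ?_
      · unfold Supp; push_cast; omega
      · unfold Vf; push_cast; linarith
  -- `wyz`
  · intro hne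
    have f1 : (j : ℤ) + 1 ≤ 2 * i := by omega
    constructor
    all_goals
      refine Good_T0 h ?_ (by push_cast; linarith) (by simp) ?_
      · unfold Supp; push_cast; omega
      · unfold Vf; push_cast; linarith

/-! ### Conclusion -/

lemma closure_step {G G' : ℤ → ℤ → ℤ → ℤ → ℤ → Prop} (f : P4 → P4) (h0 : f 0 = 0)
    (hadd : ∀ P R, f (P + R) = f P + f R) (hneg : ∀ P, f (-P) = - f P)
    (hf : ∀ (i j k l : ℕ) (e : ℤ), G i j k l e → f (U i j k l e) ∈ AddSubgroup.closure (Gen G'))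
    {P : P4} (hP : P ∈ AddSubgroup.closure (Gen G)) : f P ∈ AddSubgroup.closure (Gen G') := by
  induction hP using AddSubgroup.closure_induction with
  | mem x hx =>
    obtain ⟨i, j, k, l, e, hG, rfl⟩ := hx
    exact hf i j k l e hG
  | zero => rw [h0]; exact zero_mem _
  | add x y _ _ hx hy => rw [hadd]; exact add_mem hx hy
  | neg x _ hx => rw [hneg]; exact neg_mem hx

lemma Qb0_mem (b : ℕ) : Qb0 b ∈ AddSubgroup.closure (Gen (GoodB b)) := by
  induction b with
  | zero =>
    refine AddSubgroup.subset_closure ⟨0, 0, 0, 0, 0, ?_, ?_⟩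
    · refine ⟨?_, ?_⟩
      · simp [Supp]
      · simp [Vf]
    · simp [Qb0, U]
  | succ b ih =>
    have := closure_step (G' := GoodB (b + 1)) (stepB b) (by simp [stepB])
      (fun P R => by simp only [stepB, map_add]; ring)
      (fun P => by simp only [stepB, map_neg]; ring) (stepB_gen b) ih
    push_cast
    exact this

lemma Q_mem (b c : ℕ) : Q b c ∈ AddSubgroup.closure (Gen (Good b c)) := by
  induction c with
  | zero =>
    have h := Qb0_mem b
    rw [Q]
    refine AddSubgroup.closure_mono ?_ h
    rintro _ ⟨i, j, k, l, e, hG, rfl⟩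
    exact ⟨i, j, k, l, e, ⟨by simpa using hG.1, Or.inl (by simpa using hG.2)⟩, rfl⟩
  | succ c ih =>
    have := closure_step (G' := Good b (c + 1)) (stepC b c) (by simp [stepC])
      (fun P R => by simp only [stepC, map_add]; ring)
      (fun P => by simp only [stepC, map_neg]; ring) (stepC_gen b c (by positivity)) ih
    push_cast
    rw [Q]
    exact this

lemma U_coeff_mem (i j k l : ℕ) (e : ℤ) (he : 0 ≤ e) (m : Fin 4 →₀ ℕ) :
    MvPolynomial.coeff m (U i j k l e) ∈ Subring.closure {q ^ (2 : ℕ)} := by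
  lift e to ℕ using he with n
  have hq : q ^ (2 * ((n : ℕ) : ℤ)) = (q ^ (2 : ℕ)) ^ n := by
    rw [← pow_mul, ← zpow_natCast]; push_cast; rfl
  have hq2 : (q ^ (2 : ℕ)) ^ n ∈ Subring.closure {q ^ (2 : ℕ)} :=
    pow_mem (Subring.subset_closure (Set.mem_singleton _)) n
  have hm : (xP ^ i * yP ^ j * zP ^ k * wP ^ l : P4)
      = monomial (Finsupp.single 0 i + Finsupp.single 1 j + Finsupp.single 2 k
        + Finsupp.single 3 l) 1 := by
    simp [xP, yP, zP, wP, X_pow_eq_monomial, monomial_mul]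
  unfold U
  rw [hm, hq, coeff_C_mul, coeff_monomial]
  split_ifs
  · rw [mul_one]; exact hq2
  · rw [mul_zero]; exact zero_mem _

/-- every coefficient of `Q_{b,c}` lies in the subring
`ℤ[q²] ⊆ K = ℚ(q)`. -/
theorem Q_coeff_mem (b c : ℕ) (m : Fin 4 →₀ ℕ) :
    MvPolynomial.coeff m (Q b c) ∈ Subring.closure {q ^ (2 : ℕ)} := by
  have h := Q_mem b c
  generalize Q b c = P at h ⊢
  induction h using AddSubgroup.closure_induction with
  | mem x hx =>
    obtain ⟨i, j, k, l, e, hG, rfl⟩ := hx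
    exact U_coeff_mem i j k l e (Good_nonneg hG) m
  | zero => simp
  | add x y _ _ hx hy => rw [coeff_add]; exact add_mem hx hy
  | neg x _ hx => rw [coeff_neg]; exact neg_mem hx
end
end
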